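/- arXiv:1403.4685 — 2 statements merged into one kernel-verified Lean document; each statement's English description precedes it below -/
import Mathlib

section
/- Let p be a prime, F a field of characteristic p, n a positive integer, and r, s integers with 1 ≤ r ≤ p^n − 1 and 1 ≤ s ≤ p^n. Set b = min(r,s), and suppose the Kronecker product J_r ⊗ J_s is similar over F to the block-diagonal matrix with diagonal blocks J_{λ_1},…,J_{λ_b}, where λ_1 ≥ ⋯ ≥ λ_b > 0. Then λ_i ≤ p^n for all i, and J_{p^n−r} ⊗ J_s is similar over F to the block-diagonal matrix consisting of s − b blocks equal to J_{p^n} together with one block J_{p^n−λ_i} for each index i with λ_i < p^n. -/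
/-!
Write `q = p ^ n`. In characteristic `p` we have `(A - 1) ^ q = A ^ q - 1`, so a matrix `A` with
`A ^ q = 1` is a module over `F[X]/(X ^ q)` on which `X` acts as `A - 1`, and `J_m ^ q = 1` exactly
when `m ≤ q`; this bounds the `λᵢ`.

Let `B ^ q = 1`. Splitting off the last `r` indices of `J_q` presents `J_{q-r} ⊗ B` as the kernel
of a surjection `J_q ⊗ B → J_r ⊗ B`, and in the same way `⨁ J_{q-λᵢ}` is the kernel of a surjection
`⨁ J_q → ⨁ J_{λᵢ}`. Both sources are free: `J_q` is the regular representation of the cyclic group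
of order `q`, and tensoring it with any representation gives a free module. If they have the same
rank and `J_r ⊗ B ≅ ⨁ J_{λᵢ}`, then Schanuel's lemma shows that the kernels are isomorphic. The
blocks `J_q` of the conclusion are the duals of empty blocks `J_0` appended to the decomposition.
-/

open Kronecker

/-- The `m × m` Jordan block with eigenvalue `1`: ones on the main diagonal and the
superdiagonal, zeros elsewhere. -/
def jordanBlock (F : Type*) [Zero F] [One F] (m : ℕ) : Matrix (Fin m) (Fin m) F :=
  Matrix.of fun i j => if (j : ℕ) = (i : ℕ) ∨ (j : ℕ) = (i : ℕ) + 1 then 1 else 0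

/-- The block-diagonal matrix whose diagonal blocks are the Jordan blocks `J_{d i}`, `i : ι`. -/
def jordanBlockDiag (F : Type*) [Field F] {ι : Type} [DecidableEq ι] (d : ι → ℕ) :
    Matrix ((i : ι) × Fin (d i)) ((i : ι) × Fin (d i)) F :=
  Matrix.blockDiagonal' fun i => jordanBlock F (d i)

/-- Similarity of square matrices, possibly indexed by different (finite) types:
both matrices represent the same linear endomorphism up to a linear change of basis. -/
def MatSimilar (F : Type*) [Field F] {n m : Type*} [Fintype n] [Fintype m]
    (A : Matrix n n F) (B : Matrix m m F) : Prop :=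
  ∃ e : (n → F) ≃ₗ[F] (m → F), ∀ v, e (A.mulVec v) = B.mulVec (e v)

open Function (Semiconj Surjective)

section Shift

variable {R W V : Type*} [CommRing R] [AddCommGroup W] [Module R W] [AddCommGroup V] [Module R V]

/-- The operator `J_q - 1` with coefficients in `W`, lowering coordinates by one. It makes
`Fin q → W` the free module over `R[X]/(X^q)` on `W`, with `X` acting as `jordanShift R W q`. -/
def jordanShift (R W : Type*) [CommRing R] [AddCommGroup W] [Module R W] (q : ℕ) :
    Module.End R (Fin q → W) where
  toFun x k := if h : (k : ℕ) + 1 < q then x ⟨k + 1, h⟩ else 0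
  map_add' x y := by ext k; simp only [Pi.add_apply]; split_ifs <;> simp
  map_smul' c x := by ext k; simp only [Pi.smul_apply, RingHom.id_apply]; split_ifs <;> simp

namespace jordanShift

variable {q : ℕ}

lemma apply (x : Fin q → W) (k : Fin q) :
    jordanShift R W q x k = if h : (k : ℕ) + 1 < q then x ⟨k + 1, h⟩ else 0 := rfl

lemma pow_apply (t : ℕ) (x : Fin q → W) (k : Fin q) :
    (jordanShift R W q ^ t) x k = if h : (k : ℕ) + t < q then x ⟨k + t, h⟩ else 0 := by
  induction t generalizing x with
  | zero => simp
  | succ t ih =>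
    rw [pow_succ, Module.End.mul_apply, ih]
    simp only [apply, add_assoc]
    split_ifs <;> first | rfl | omega

lemma pow_self : jordanShift R W q ^ q = 0 := by
  ext x k
  simp [pow_apply]

lemma commute_compLeft (β : Module.End R W) :
    Commute (jordanShift R W q) (β.compLeft (Fin q)) := by
  refine LinearMap.ext fun x => funext fun k => ?_
  simp only [Module.End.mul_apply, apply, LinearMap.compLeft_apply, Function.comp_apply]
  split_ifs <;> simp

/-- The map of `R[X]/(X^q)`-modules out of `Fin q → W` that extends `v` on the generators, when
`X` acts on the target as `N` with `N ^ q = 0`. -/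
def lift (q : ℕ) (N : Module.End R V) (v : W →ₗ[R] V) : (Fin q → W) →ₗ[R] V :=
  ∑ k : Fin q, (N ^ (k.rev : ℕ)) ∘ₗ v ∘ₗ LinearMap.proj k

lemma lift_single (N : Module.End R V) (v : W →ₗ[R] V) (k : Fin q) (w : W) :
    lift q N v (Pi.single k w) = (N ^ (k.rev : ℕ)) (v w) := by
  simp only [lift, LinearMap.sum_apply, LinearMap.comp_apply, LinearMap.proj_apply]
  rw [Finset.sum_eq_single k (fun l _ hl => by simp [hl]) (by simp), Pi.single_eq_same]

variable [NeZero q]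

/-- The inclusion of the generators `W` of `Fin q → W` as the last coordinate. -/
def gen (R W : Type*) [CommRing R] [AddCommGroup W] [Module R W] (q : ℕ) [NeZero q] :
    W →ₗ[R] (Fin q → W) :=
  LinearMap.single R (fun _ => W) (Fin.rev 0)

lemma pow_rev_gen (k : Fin q) (w : W) :
    (jordanShift R W q ^ (k.rev : ℕ)) (gen R W q w) = Pi.single k w := by
  ext l
  simp only [pow_apply, gen, LinearMap.single_apply, Pi.single_apply, Fin.ext_iff, Fin.val_rev,
    Fin.val_zero]
  split_ifs <;> first | rfl | omega

lemma lift_gen (N : Module.End R V) (v : W →ₗ[R] V) (w : W) :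
    lift q N v (gen R W q w) = v w := by
  simp [gen, lift_single]

lemma lift_pow_gen {N : Module.End R V} (hN : N ^ q = 0) (v : W →ₗ[R] V) (t : ℕ) (w : W) :
    lift q N v ((jordanShift R W q ^ t) (gen R W q w)) = (N ^ t) (v w) := by
  by_cases ht : t < q
  · have hrev : ((Fin.rev ⟨t, ht⟩).rev : ℕ) = t := by rw [Fin.rev_rev]
    rw [← hrev, pow_rev_gen, lift_single]
  · rw [pow_eq_zero_of_le (not_lt.1 ht) hN, pow_eq_zero_of_le (not_lt.1 ht) pow_self]
    simp

lemma semiconj_lift {N : Module.End R V} (hN : N ^ q = 0) (v : W →ₗ[R] V) :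
    Semiconj (lift q N v) (jordanShift R W q) N := by
  suffices h : lift q N v ∘ₗ jordanShift R W q = N ∘ₗ lift q N v from LinearMap.congr_fun h
  refine LinearMap.pi_ext fun k w => ?_
  simp only [LinearMap.comp_apply, ← pow_rev_gen (R := R), lift_pow_gen hN,
    ← Module.End.mul_apply, ← pow_succ']

lemma hom_ext {N : Module.End R V} {f g : (Fin q → W) →ₗ[R] V}
    (hf : Semiconj f (jordanShift R W q) N) (hg : Semiconj g (jordanShift R W q) N)
    (h : f ∘ₗ gen R W q = g ∘ₗ gen R W q) : f = g := by
  refine LinearMap.pi_ext fun k w => ?_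
  rw [← pow_rev_gen (R := R), Module.End.pow_apply, hf.iterate_right, hg.iterate_right]
  exact congrArg _ (LinearMap.congr_fun h w)

lemma exists_add_gen (x : Fin q → W) : ∃ z w, x = jordanShift R W q z + gen R W q w := by
  refine ⟨fun k => x ⟨k - 1, by omega⟩, x (Fin.rev 0), funext fun k => ?_⟩
  by_cases hk : (k : ℕ) + 1 < q
  · have hne : k ≠ Fin.rev 0 := fun h => by rw [h, Fin.val_rev, Fin.val_zero] at hk; omega
    simp [apply, gen, hk, hne]
  · obtain rfl : k = Fin.rev 0 := Fin.ext (by rw [Fin.val_rev, Fin.val_zero]; omega)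
    have hlast : ¬ q - 1 + 1 < q := by have := NeZero.pos q; omega
    simp [apply, gen, hlast]

lemma compLeft_gen (β : Module.End R W) (w : W) :
    β.compLeft (Fin q) (gen R W q w) = gen R W q (β w) :=
  funext fun k => Pi.apply_single (fun _ => β) (fun _ => map_zero β) _ w k

lemma commute_lift (v : W →ₗ[R] (Fin q → W)) :
    Commute (jordanShift R W q) (lift q (jordanShift R W q) v : Module.End R (Fin q → W)) :=
  LinearMap.ext fun x => (semiconj_lift pow_self v x).symm

lemma bijective_lift_gen_add (g : W ≃ₗ[R] W) (h : W →ₗ[R] (Fin q → W)) :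
    Function.Bijective
      (lift q (jordanShift R W q) (gen R W q ∘ₗ g + jordanShift R W q ∘ₗ h)) := by
  set T := jordanShift R W q
  let G : (Fin q → W) ≃ₗ[R] (Fin q → W) := .piCongrRight fun _ => g
  let K : Module.End R (Fin q → W) := lift q T (h ∘ₗ g.symm)
  have hTK : Commute T K := commute_lift _
  have hfactor : lift q T (gen R W q ∘ₗ g + T ∘ₗ h) = (1 + T * K) ∘ₗ G := by
    have hG : Semiconj G T T := fun x =>
      (LinearMap.congr_fun (commute_compLeft (g : Module.End R W)) x).symm
    have hTK' : Semiconj (1 + T * K : Module.End R (Fin q → W)) T T := LinearMap.congr_fun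
      ((Commute.one_right T).add_right ((Commute.refl T).mul_right hTK)).symm.eq
    refine hom_ext (semiconj_lift pow_self _) (hG.trans hTK') ?_
    ext1 w
    have hGgen : G (gen R W q w) = gen R W q (g w) := compLeft_gen (g : Module.End R W) w
    simp [lift_gen, hGgen, K]
  have hunit : IsUnit (1 + T * K) := (hTK.isNilpotent_mul_right ⟨q, pow_self⟩).isUnit_one_add
  rw [hfactor, LinearMap.coe_comp]
  exact ((Module.End.isUnit_iff _).1 hunit).comp G.bijective

end jordanShift

end Shift

section Surjections

variable {F W M : Type*} [Field F] [AddCommGroup W] [Module F W] [AddCommGroup M] [Module F M]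

lemma exists_equiv_snd_of_surjective (u : W →ₗ[F] M) (hu : Surjective u) :
    ∃ e : W ≃ₗ[F] u.ker × M, ∀ x, (e x).2 = u x := by
  obtain ⟨σ, hσ⟩ := u.exists_rightInverse_of_surjective (LinearMap.range_eq_top.2 hu)
  obtain ⟨e, -, he⟩ := (LinearMap.exact_subtype_ker_map u).splitSurjectiveEquiv
    u.ker.injective_subtype ⟨σ, hσ⟩
  exact ⟨e, fun x => (LinearMap.congr_fun he x).symm⟩

lemma exists_comp_eq_of_range_le {P : Type*} [AddCommGroup P] [Module F P] (f : P →ₗ[F] M)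
    (g : W →ₗ[F] M) (h : g.range ≤ f.range) : ∃ k : W →ₗ[F] P, f ∘ₗ k = g := by
  obtain ⟨k, hk⟩ := Module.projective_lifting_property f.rangeRestrict
    (g.codRestrict f.range fun x => h ⟨x, rfl⟩) f.surjective_rangeRestrict
  exact ⟨k, LinearMap.ext fun x => congrArg Subtype.val (LinearMap.congr_fun hk x)⟩

lemma jordanShift.surjective_mkQ_comp_gen {q : ℕ} [NeZero q] {N : Module.End F M}
    {φ : (Fin q → W) →ₗ[F] M} (hφ : Surjective φ) (hφN : Semiconj φ (jordanShift F W q) N) :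
    Surjective (N.range.mkQ ∘ₗ φ ∘ₗ gen F W q) := by
  refine N.range.mkQ_surjective.forall.2 (hφ.forall.2 fun x => ?_)
  obtain ⟨z, w, rfl⟩ := exists_add_gen (R := F) x
  exact ⟨w, by simp [hφN.eq]⟩

variable [FiniteDimensional F W]

lemma exists_automorphism_comp_eq_of_surjective {u u' : W →ₗ[F] M}
    (hu : Surjective u) (hu' : Surjective u') : ∃ g : W ≃ₗ[F] W, u' ∘ₗ g = u := by
  obtain ⟨e, he⟩ := exists_equiv_snd_of_surjective u hu
  obtain ⟨e', he'⟩ := exists_equiv_snd_of_surjective u' hu'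
  have hker : Module.finrank F u.ker = Module.finrank F u'.ker := by
    have h := u.finrank_range_add_finrank_ker
    have h' := u'.finrank_range_add_finrank_ker
    rw [LinearMap.range_eq_top.2 hu] at h
    rw [LinearMap.range_eq_top.2 hu'] at h'
    omega
  let g := e ≪≫ₗ (LinearEquiv.ofFinrankEq _ _ hker).prodCongr (.refl F M) ≪≫ₗ e'.symm
  refine ⟨g, LinearMap.ext fun x => ?_⟩
  simp [g, ← he, ← he']

/-- Schanuel's lemma over `F[X]/(X^q)`. Modulo `X` the automorphism is found by linear algebra;
it lifts because the module is free, and the lift is invertible because `X` is nilpotent. -/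
theorem jordanShift.exists_equiv_comp_eq {q : ℕ} [NeZero q] {N : Module.End F M}
    {φ φ' : (Fin q → W) →ₗ[F] M} (hφ : Surjective φ) (hφ' : Surjective φ')
    (hφN : Semiconj φ (jordanShift F W q) N) (hφN' : Semiconj φ' (jordanShift F W q) N) :
    ∃ θ : (Fin q → W) ≃ₗ[F] (Fin q → W),
      Semiconj θ (jordanShift F W q) (jordanShift F W q) ∧ ∀ x, φ' (θ x) = φ x := by
  set T := jordanShift F W q
  obtain ⟨g, hg⟩ := exists_automorphism_comp_eq_of_surjective
    (surjective_mkQ_comp_gen hφ hφN) (surjective_mkQ_comp_gen hφ' hφN')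
  obtain ⟨h, hh⟩ : ∃ h : W →ₗ[F] (Fin q → W),
      (φ' ∘ₗ T) ∘ₗ h = φ ∘ₗ gen F W q - φ' ∘ₗ gen F W q ∘ₗ g := by
    refine exists_comp_eq_of_range_le _ _ ?_
    have hrange : (φ' ∘ₗ T).range = N.range := by
      rw [show φ' ∘ₗ T = N ∘ₗ φ' from LinearMap.ext hφN',
        LinearMap.range_comp_of_range_eq_top N (LinearMap.range_eq_top.2 hφ')]
    rw [hrange, ← N.range.ker_mkQ, LinearMap.range_le_ker_iff, LinearMap.comp_sub, ← hg]
    exact sub_self _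
  let v : W →ₗ[F] (Fin q → W) := gen F W q ∘ₗ g + T ∘ₗ h
  have hT : Semiconj (lift q T v) T T := semiconj_lift pow_self v
  refine ⟨.ofBijective (lift q T v) (bijective_lift_gen_add g h), hT,
    LinearMap.congr_fun (f := φ' ∘ₗ lift q T v) (hom_ext (hT.trans hφN') hφN ?_)⟩
  ext1 w
  have hw : φ' (T (h w)) = φ (gen F W q w) - φ' (gen F W q (g w)) := LinearMap.congr_fun hh w
  simp [v, lift_gen, hw]

end Surjections

lemma sub_one_pow_expChar_pow (R : Type*) {A : Type*} [CommRing R] [Ring A] [Algebra R A] (p n : ℕ)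
    [ExpChar R p] (x : A) : (x - 1) ^ p ^ n = x ^ p ^ n - 1 := by
  have h : (Polynomial.X - 1 : Polynomial R) ^ p ^ n = Polynomial.X ^ p ^ n - 1 := by
    rw [sub_pow_expChar_pow, one_pow]
  simpa using congrArg (Polynomial.aeval x) h

section Twist

variable {R W : Type*} [CommRing R] [AddCommGroup W] [Module R W] {q : ℕ}

namespace jordanShift

/-- The operator `J_q ⊗ β` on `Fin q → W`. -/
def twist (q : ℕ) (β : Module.End R W) : Module.End R (Fin q → W) :=
  (1 + jordanShift R W q) * β.compLeft (Fin q)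

lemma twist_sub_one_pow_expChar_pow {p n : ℕ} [ExpChar R p] {β : Module.End R W}
    (hβ : β ^ p ^ n = 1) : (twist (p ^ n) β - 1) ^ p ^ n = 0 := by
  have hβ' : β.compLeft (Fin (p ^ n)) ^ p ^ n = 1 := by
    refine LinearMap.ext fun x => funext fun k => ?_
    have h : Semiconj (fun y : Fin (p ^ n) → W => y k) (β.compLeft _) β := fun _ => rfl
    rw [Module.End.pow_apply, (h.iterate_right _).eq, ← Module.End.pow_apply, hβ]
    rfl
  have hT : (1 + jordanShift R W (p ^ n)) ^ p ^ n = 1 := by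
    rw [← sub_eq_zero, ← sub_one_pow_expChar_pow R, add_sub_cancel_left, pow_self]
  rw [sub_one_pow_expChar_pow R, twist,
    ((Commute.one_left _).add_left (commute_compLeft β)).mul_pow, hT, hβ', mul_one, sub_self]

variable [NeZero q]

/-- The map from `J_q ⊗ 1` to `J_q ⊗ β` that is the identity on the generators. -/
def untwist (q : ℕ) [NeZero q] (β : Module.End R W) : Module.End R (Fin q → W) :=
  lift q (twist q β - 1) (gen R W q)

lemma untwist_mul {β : Module.End R W} (hβ : (twist q β - 1) ^ q = 0) :
    untwist q β * (1 + jordanShift R W q) = twist q β * untwist q β := by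
  refine LinearMap.ext fun x => ?_
  have h := semiconj_lift hβ (gen R W q) x
  simp [untwist, mul_add, h]

lemma commute_compLeft_untwist {β γ : Module.End R W} (hγ : Commute γ β)
    (hβ : (twist q β - 1) ^ q = 0) : Commute (γ.compLeft (Fin q)) (untwist q β) := by
  have hγtwist : Commute (γ.compLeft (Fin q)) (twist q β - 1) := by
    have hγβ : Commute (γ.compLeft (Fin q)) (β.compLeft (Fin q)) :=
      LinearMap.ext fun x => funext fun k => LinearMap.congr_fun hγ.eq (x k)
    exact (((Commute.one_right _).add_right (commute_compLeft γ).symm).mul_right hγβ).sub_right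
      (.one_right _)
  have hγtwist' : Semiconj (γ.compLeft (Fin q)) (twist q β - 1 : Module.End R (Fin q → W))
      (twist q β - 1 : Module.End R (Fin q → W)) := LinearMap.congr_fun hγtwist.eq
  have hγshift : Semiconj (γ.compLeft (Fin q)) (jordanShift R W q) (jordanShift R W q) :=
    LinearMap.congr_fun (commute_compLeft γ).symm.eq
  refine hom_ext ((semiconj_lift hβ _).trans hγtwist') (hγshift.trans (semiconj_lift hβ _))
    (LinearMap.ext fun w => ?_)
  simp [untwist, lift_gen, compLeft_gen]

lemma untwist_mul_untwist {β γ : Module.End R W} (hβγ : β * γ = 1) (hγβ : γ * β = 1)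
    (hβ : (twist q β - 1) ^ q = 0) (hγ : (twist q γ - 1) ^ q = 0) :
    untwist q γ * untwist q β = 1 := by
  set T := jordanShift R W q
  have hcancel : γ.compLeft (Fin q) * β.compLeft (Fin q) = 1 :=
    LinearMap.ext fun x => funext fun k => LinearMap.congr_fun hγβ (x k)
  have hcomm := (commute_compLeft_untwist (hβγ.trans hγβ.symm : Commute β γ) hγ).eq
  have hshift : untwist q γ * untwist q β * (1 + T) = (1 + T) * (untwist q γ * untwist q β) :=
    calc untwist q γ * untwist q β * (1 + T)
        = untwist q γ * (1 + T) * β.compLeft (Fin q) * untwist q β := by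
          rw [mul_assoc, untwist_mul hβ, twist, mul_assoc, mul_assoc, mul_assoc]
      _ = (1 + T) * γ.compLeft (Fin q) * (untwist q γ * β.compLeft (Fin q)) * untwist q β := by
          rw [untwist_mul hγ, twist, mul_assoc _ (untwist q γ)]
      _ = (1 + T) * (γ.compLeft (Fin q) * β.compLeft (Fin q)) * (untwist q γ * untwist q β) := by
          rw [← hcomm]; simp only [mul_assoc]
      _ = (1 + T) * (untwist q γ * untwist q β) := by rw [hcancel, mul_one]
  rw [mul_add, mul_one, add_mul, one_mul, add_right_inj] at hshift
  have hT : Semiconj (untwist q γ * untwist q β : Module.End R _) T T := LinearMap.congr_fun hshift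
  refine hom_ext hT Semiconj.id_left (LinearMap.ext fun w => ?_)
  simp [untwist, lift_gen]

theorem exists_equiv_semiconj_twist {p n : ℕ} [ExpChar R p] {β : Module.End R W}
    (hβ : β ^ p ^ n = 1) : ∃ e : (Fin (p ^ n) → W) ≃ₗ[R] (Fin (p ^ n) → W),
      Semiconj e (twist (p ^ n) β) (1 + jordanShift R W (p ^ n) : Module.End R _) := by
  have : NeZero (p ^ n) := ⟨(pow_pos (expChar_pos R p) n).ne'⟩
  have hβγ : β * β ^ (p ^ n - 1) = 1 := by rw [mul_pow_sub_one NeZero.out, hβ]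
  have hγβ : β ^ (p ^ n - 1) * β = 1 := by rw [pow_sub_one_mul NeZero.out, hβ]
  have hγ : (β ^ (p ^ n - 1)) ^ p ^ n = 1 := by rw [pow_right_comm, hβ, one_pow]
  have htβ := twist_sub_one_pow_expChar_pow hβ
  have htγ := twist_sub_one_pow_expChar_pow hγ
  let e : (Fin (p ^ n) → W) ≃ₗ[R] (Fin (p ^ n) → W) := .ofLinearMap
    (untwist (p ^ n) β) (untwist (p ^ n) (β ^ (p ^ n - 1)))
    (untwist_mul_untwist hγβ hβγ htγ htβ) (untwist_mul_untwist hβγ hγβ htβ htγ)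
  have he : Semiconj e (1 + jordanShift R W (p ^ n) : Module.End R _) (twist (p ^ n) β) :=
    LinearMap.congr_fun (untwist_mul htβ)
  exact ⟨e.symm, he.inverse_left e.left_inv e.right_inv⟩

end jordanShift

end Twist

namespace MatSimilar

variable {F m n : Type*} [Field F] [Fintype m] [Fintype n]

lemma symm {A : Matrix n n F} {B : Matrix m m F} :
    MatSimilar F A B → MatSimilar F B A
  | ⟨e, he⟩ => ⟨e.symm, Semiconj.inverse_left he e.left_inv e.right_inv⟩

lemma trans {l : Type*} [Fintype l] {A : Matrix n n F} {B : Matrix m m F} {C : Matrix l l F} :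
    MatSimilar F A B → MatSimilar F B C → MatSimilar F A C
  | ⟨e, he⟩, ⟨f, hf⟩ => ⟨e ≪≫ₗ f, Semiconj.trans he hf⟩

lemma submatrix_equiv (A : Matrix n n F) (e : m ≃ n) : MatSimilar F A (A.submatrix e e) :=
  ⟨.funCongrLeft F F e, fun v => by
    simp [Matrix.submatrix_mulVec_equiv, LinearMap.funLeft, Function.comp_assoc]⟩

lemma pow_eq_one [DecidableEq m] [DecidableEq n] {A : Matrix n n F} {B : Matrix m m F}
    (h : MatSimilar F A B) {k : ℕ} (hA : A ^ k = 1) : B ^ k = 1 := by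
  obtain ⟨e, he⟩ := h
  have hconj : e.conjRingEquiv A.toLin' = B.toLin' := LinearMap.ext fun x => by simp [he]
  apply Matrix.toLin'.injective
  rw [Matrix.toLin'_pow, ← hconj, ← map_pow, ← Matrix.toLin'_pow, hA, Matrix.toLin'_one,
    Matrix.toLin'_one]
  exact map_one _

lemma exists_fromBlocks {a c : Type*} [Fintype a] [Fintype c] {A : Matrix n n F}
    {A₁ : Matrix a a F} {C : Matrix c c F} (e : a ⊕ c ≃ n)
    (h₁₁ : ∀ i j, A (e (.inl i)) (e (.inl j)) = A₁ i j)
    (h₂₁ : ∀ i j, A (e (.inr i)) (e (.inl j)) = 0)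
    (h₂₂ : ∀ i j, A (e (.inr i)) (e (.inr j)) = C i j) :
    ∃ E, MatSimilar F A (Matrix.fromBlocks A₁ E 0 C) := by
  let E := (A.submatrix e e).toBlocks₁₂
  have hblocks : A.submatrix e e = Matrix.fromBlocks A₁ E 0 C :=
    Matrix.ext_iff_blocks.2 ⟨Matrix.ext h₁₁, rfl, Matrix.ext h₂₁, Matrix.ext h₂₂⟩
  exact ⟨E, hblocks ▸ .submatrix_equiv A e⟩

end MatSimilar

section JordanBlock

variable {F : Type*} [Field F]

lemma toLin'_jordanBlock (m : ℕ) : (jordanBlock F m).toLin' = 1 + jordanShift F F m := by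
  ext l k
  simp only [jordanBlock, LinearMap.comp_apply, LinearMap.single_apply, Matrix.toLin'_apply,
    Matrix.mulVec_single_one, Matrix.col_apply, Matrix.of_apply, LinearMap.add_apply,
    Module.End.one_apply, Pi.add_apply, jordanShift.apply, Pi.single_apply, Fin.ext_iff]
  split_ifs <;> first | omega | simp

lemma jordanBlock_mulVec (m : ℕ) (v : Fin m → F) :
    (jordanBlock F m).mulVec v = v + jordanShift F F m v := by
  rw [← Matrix.toLin'_apply, toLin'_jordanBlock]
  rfl

lemma jordanShift_pow_eq_zero_iff {m t : ℕ} : jordanShift F F m ^ t = 0 ↔ m ≤ t := by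
  refine ⟨fun h => ?_, fun h => pow_eq_zero_of_le h jordanShift.pow_self⟩
  by_contra! hlt
  have h0 := congrFun (LinearMap.congr_fun h fun _ => 1) ⟨0, by omega⟩
  simp [jordanShift.pow_apply, hlt] at h0

lemma jordanBlock_pow_expChar_pow_eq_one_iff {p n m : ℕ} [ExpChar F p] :
    jordanBlock F m ^ p ^ n = 1 ↔ m ≤ p ^ n := by
  rw [← jordanShift_pow_eq_zero_iff (F := F), ← Matrix.toLin'.injective.eq_iff, Matrix.toLin'_pow,
    Matrix.toLin'_one, toLin'_jordanBlock, ← Module.End.one_eq_id, ← sub_eq_zero,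
    ← sub_one_pow_expChar_pow F, add_sub_cancel_left]

variable {m : Type*} [Fintype m] [DecidableEq m]

lemma kronecker_pow {l : Type*} [Fintype l] [DecidableEq l] (A : Matrix l l F) (B : Matrix m m F)
    (k : ℕ) : (A ⊗ₖ B) ^ k = (A ^ k) ⊗ₖ (B ^ k) := by
  induction k with
  | zero => simp
  | succ k ih => simp only [pow_succ, Matrix.mul_kronecker_mul, ih]

lemma le_expChar_pow_of_matSimilar {p n : ℕ} [ExpChar F p] {B : Matrix m m F} (hB : B ^ p ^ n = 1)
    {r : ℕ} (hr : r ≤ p ^ n) {ι : Type} [Fintype ι] [DecidableEq ι] {lam : ι → ℕ}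
    (hsim : MatSimilar F (jordanBlock F r ⊗ₖ B) (jordanBlockDiag F lam)) (i : ι) :
    lam i ≤ p ^ n := by
  have hpow : jordanBlockDiag F lam ^ p ^ n = 1 := hsim.pow_eq_one <| by
    rw [kronecker_pow, jordanBlock_pow_expChar_pow_eq_one_iff.2 hr, hB, Matrix.one_kronecker_one]
  rw [jordanBlockDiag, ← Matrix.blockDiagonal'_pow, ← Matrix.blockDiagonal'_one,
    Matrix.blockDiagonal'_inj] at hpow
  exact jordanBlock_pow_expChar_pow_eq_one_iff.1 (congrFun hpow i)

lemma curry_jordanBlock_kronecker_mulVec (q : ℕ) (B : Matrix m m F) (v : Fin q × m → F) :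
    Function.curry ((jordanBlock F q ⊗ₖ B).mulVec v) =
      jordanShift.twist q B.toLin' (Function.curry v) := by
  ext k i
  have hblock : (jordanBlock F q ⊗ₖ B).mulVec v (k, i) =
      (jordanBlock F q).mulVec (fun l => B.mulVec (fun j => v (l, j)) i) k := by
    simp only [Matrix.mulVec, dotProduct, Fintype.sum_prod_type, Matrix.kroneckerMap_apply,
      Finset.mul_sum, mul_assoc]
  rw [Function.curry_apply, hblock, jordanBlock_mulVec]
  simp only [jordanShift.twist, Module.End.mul_apply, LinearMap.add_apply, Module.End.one_apply,
    Pi.add_apply, jordanShift.apply, LinearMap.compLeft_apply, Function.comp_apply,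
    Matrix.toLin'_apply]
  split_ifs <;> rfl

end JordanBlock

section Cancellation

variable {F W : Type*} [Field F] [AddCommGroup W] [Module F W] {q : ℕ}
  {m n : Type*} [Fintype m] [Fintype n]

/-- `A` is similar to a direct sum of copies of `J_q`. Equivalently, the `F[X]/(X^q)`-module on
which `X` acts as `A - 1` is free; the space of its generators is `W`. -/
def IsJordanFree (F W : Type*) [Field F] [AddCommGroup W] [Module F W] (q : ℕ)
    {n : Type*} [Fintype n] (A : Matrix n n F) : Prop :=
  ∃ e : (n → F) ≃ₗ[F] (Fin q → W), Semiconj e A.mulVec (1 + jordanShift F W q : Module.End F _)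

lemma IsJordanFree.of_matSimilar {A : Matrix n n F} {B : Matrix m m F} :
    IsJordanFree F W q A → MatSimilar F A B → IsJordanFree F W q B
  | ⟨e, he⟩, ⟨f, hf⟩ => ⟨f.symm ≪≫ₗ e, (Semiconj.inverse_left hf f.left_inv f.right_inv).trans he⟩

lemma isJordanFree_jordanBlock_kronecker {p n : ℕ} [ExpChar F p] [DecidableEq m] {B : Matrix m m F}
    (hB : B ^ p ^ n = 1) : IsJordanFree F (m → F) (p ^ n) (jordanBlock F (p ^ n) ⊗ₖ B) := by
  have hβ : B.toLin' ^ p ^ n = 1 := by rw [← Matrix.toLin'_pow, hB, Matrix.toLin'_one]; rfl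
  obtain ⟨e, he⟩ := jordanShift.exists_equiv_semiconj_twist hβ
  have hcurry : Semiconj (LinearEquiv.curry F F (Fin (p ^ n)) m)
      (jordanBlock F (p ^ n) ⊗ₖ B).mulVec (jordanShift.twist (p ^ n) B.toLin') :=
    curry_jordanBlock_kronecker_mulVec _ B
  exact ⟨.curry F F _ _ ≪≫ₗ e, hcurry.trans he⟩

variable {a a' c c' : Type*} [Fintype a] [Fintype a'] [Fintype c] [Fintype c']

lemma exists_equiv_inl_of_snd_eq {A A' C C' : Type*} [AddCommGroup A] [Module F A]
    [AddCommGroup A'] [Module F A'] [AddCommGroup C] [Module F C] [AddCommGroup C'] [Module F C']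
    (Ψ : (A × C) ≃ₗ[F] (A' × C')) (f : C ≃ₗ[F] C') (hf : ∀ x, (Ψ x).2 = f x.2) :
    ∃ g : A ≃ₗ[F] A', ∀ x, Ψ (x, 0) = (g x, 0) := by
  let g : A →ₗ[F] A' := LinearMap.fst F A' C' ∘ₗ Ψ ∘ₗ LinearMap.inl F A C
  have hg (x : A) : Ψ (x, 0) = (g x, 0) := Prod.ext rfl (by simp [hf])
  have hinj : Function.Injective g := fun x y hxy => by
    have h : Ψ (x, 0) = Ψ (y, 0) := by rw [hg, hg, hxy]
    exact congrArg Prod.fst (Ψ.injective h)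
  have hsurj : Surjective g := fun y => by
    obtain ⟨⟨x, z⟩, hxz⟩ := Ψ.surjective (y, 0)
    obtain rfl : z = 0 := f.map_eq_zero_iff.1 (by rw [← hf (x, z), hxz])
    exact ⟨x, congrArg Prod.fst ((hg x).symm.trans hxz)⟩
  exact ⟨.ofBijective g ⟨hinj, hsurj⟩, hg⟩

lemma matSimilar_of_equiv_fromBlocks {A : Matrix a a F} {E : Matrix a c F} {C : Matrix c c F}
    {A' : Matrix a' a' F} {E' : Matrix a' c' F} {C' : Matrix c' c' F}
    (Ψ : (a ⊕ c → F) ≃ₗ[F] (a' ⊕ c' → F)) (f : (c → F) ≃ₗ[F] (c' → F))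
    (hΨ : Semiconj Ψ (Matrix.fromBlocks A E 0 C).mulVec (Matrix.fromBlocks A' E' 0 C').mulVec)
    (hf : ∀ x, Ψ x ∘ Sum.inr = f (x ∘ Sum.inr)) : MatSimilar F A A' := by
  obtain ⟨g, hg⟩ := exists_equiv_inl_of_snd_eq ((LinearEquiv.sumArrowLequivProdArrow a c F F).symm
    ≪≫ₗ Ψ ≪≫ₗ .sumArrowLequivProdArrow a' c' F F) f (fun x => hf _)
  replace hg (x : a → F) : Ψ (Sum.elim x 0) = Sum.elim (g x) 0 :=
    (LinearEquiv.sumArrowLequivProdArrow a' c' F F).injective (hg x)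
  refine ⟨g, fun x => ?_⟩
  have h := hΨ.eq (Sum.elim x 0)
  rw [hg] at h
  simpa [Matrix.fromBlocks_mulVec, hg] using congrArg (· ∘ Sum.inl) h

lemma semiconj_funLeft_inr_symm [DecidableEq c] {A : Matrix a a F} {E : Matrix a c F}
    {C : Matrix c c F} {e : (a ⊕ c → F) ≃ₗ[F] (Fin q → W)}
    (he : Semiconj e (Matrix.fromBlocks A E 0 C).mulVec
      (1 + jordanShift F W q : Module.End F _)) :
    Semiconj (LinearMap.funLeft F F Sum.inr ∘ₗ e.symm.toLinearMap) (jordanShift F W q)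
      (C.toLin' - 1 : Module.End F _) := by
  refine e.surjective.forall.2 fun x => ?_
  have hx : jordanShift F W q (e x) = e ((Matrix.fromBlocks A E 0 C).mulVec x - x) := by
    rw [map_sub, he.eq, LinearMap.add_apply, Module.End.one_apply, add_sub_cancel_left]
  ext k
  simp [hx, LinearMap.funLeft, Matrix.fromBlocks_mulVec]

theorem matSimilar_of_isJordanFree_fromBlocks [NeZero q] [FiniteDimensional F W]
    {A : Matrix a a F} {E : Matrix a c F} {C : Matrix c c F}
    {A' : Matrix a' a' F} {E' : Matrix a' c' F} {C' : Matrix c' c' F}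
    (h : IsJordanFree F W q (Matrix.fromBlocks A E 0 C))
    (h' : IsJordanFree F W q (Matrix.fromBlocks A' E' 0 C'))
    (hC : MatSimilar F C C') : MatSimilar F A A' := by
  classical
  obtain ⟨e, he⟩ := h
  obtain ⟨e', he'⟩ := h'
  obtain ⟨f, hf⟩ := hC
  let φ : (Fin q → W) →ₗ[F] (c' → F) := f ∘ₗ LinearMap.funLeft F F Sum.inr ∘ₗ e.symm.toLinearMap
  let φ' : (Fin q → W) →ₗ[F] (c' → F) := LinearMap.funLeft F F Sum.inr ∘ₗ e'.symm.toLinearMap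
  have hφ : Surjective φ := f.surjective.comp
    ((LinearMap.funLeft_surjective_of_injective F F _ Sum.inr_injective).comp e.symm.surjective)
  have hφ' : Surjective φ' :=
    (LinearMap.funLeft_surjective_of_injective F F _ Sum.inr_injective).comp e'.symm.surjective
  have hφT : Semiconj φ (jordanShift F W q) (C'.toLin' - 1 : Module.End F _) := by
    have hfC : Semiconj f (C.toLin' - 1 : Module.End F _) (C'.toLin' - 1 : Module.End F _) :=
      fun x => by simp [hf]
    exact (semiconj_funLeft_inr_symm he).trans hfC
  obtain ⟨θ, hθT, hθ⟩ :=
    jordanShift.exists_equiv_comp_eq hφ hφ' hφT (semiconj_funLeft_inr_symm he')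
  have hθT' : Semiconj θ (1 + jordanShift F W q : Module.End F _)
      (1 + jordanShift F W q : Module.End F _) := fun x => by simp [hθT.eq]
  refine matSimilar_of_equiv_fromBlocks (e ≪≫ₗ θ ≪≫ₗ e'.symm) f
    ((he.trans hθT').trans (he'.inverse_left e'.left_inv e'.right_inv)) fun x => ?_
  have hx : φ' (θ (e x)) = φ (e x) := hθ (e x)
  simpa [φ, φ', LinearMap.funLeft] using hx

end Cancellation

section JordanBlockDiag

variable {F : Type*} [Field F] {ι : Type} [DecidableEq ι]

lemma jordanBlockDiag_apply (d : ι → ℕ) (x y : (i : ι) × Fin (d i)) :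
    jordanBlockDiag F d x y =
      if x.1 = y.1 ∧ ((y.2 : ℕ) = x.2 ∨ (y.2 : ℕ) = x.2 + 1) then 1 else 0 := by
  obtain ⟨i, k⟩ := x
  obtain ⟨j, l⟩ := y
  by_cases hij : i = j
  · subst hij
    simp [jordanBlockDiag, Matrix.blockDiagonal'_apply_eq, jordanBlock]
  · simp [jordanBlockDiag, Matrix.blockDiagonal'_apply_ne _ _ _ hij, hij]

variable [Fintype ι]

lemma matSimilar_kronecker_one_jordanBlockDiag {m : Type*} [Fintype m] [DecidableEq m] (e : ι ≃ m)
    (q : ℕ) : MatSimilar F (jordanBlock F q ⊗ₖ (1 : Matrix m m F))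
      (jordanBlockDiag F fun _ : ι => q) := by
  let f : ((_ : ι) × Fin q) ≃ Fin q × m :=
    (Equiv.sigmaEquivProd ι (Fin q)).trans ((e.prodCongr (.refl _)).trans (.prodComm _ _))
  have hf : (jordanBlock F q ⊗ₖ (1 : Matrix m m F)).submatrix f f =
      jordanBlockDiag F fun _ : ι => q := by
    ext x y
    simp [f, jordanBlockDiag_apply, jordanBlock, Matrix.one_apply, ← ite_and]
  exact hf ▸ .submatrix_equiv _ f

lemma matSimilar_jordanBlockDiag_sumElim_zero {κ : Type} [Fintype κ] [DecidableEq κ] (d : ι → ℕ) :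
    MatSimilar F (jordanBlockDiag F (Sum.elim (fun _ : κ => 0) d)) (jordanBlockDiag F d) := by
  let f (x : (i : ι) × Fin (d i)) : (i : κ ⊕ ι) × Fin (Sum.elim (fun _ => 0) d i) := ⟨.inr x.1, x.2⟩
  have hinj : Function.Injective f := fun ⟨i, k⟩ ⟨j, l⟩ h => by
    obtain ⟨hij, hkl⟩ := Sigma.mk.inj_iff.1 h
    obtain rfl := Sum.inr_injective hij
    exact Sigma.mk.inj_iff.2 ⟨rfl, hkl⟩
  have hsurj : Surjective f
    | ⟨.inl _, k⟩ => k.elim0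
    | ⟨.inr i, k⟩ => ⟨⟨i, k⟩, rfl⟩
  let e := Equiv.ofBijective f ⟨hinj, hsurj⟩
  have he : (jordanBlockDiag F (Sum.elim (fun _ : κ => 0) d)).submatrix e e =
      jordanBlockDiag F d := by
    ext x y
    have hx : e x = ⟨.inr x.1, x.2⟩ := rfl
    have hy : e y = ⟨.inr y.1, y.2⟩ := rfl
    simp [hx, hy, jordanBlockDiag_apply]
  exact he ▸ .submatrix_equiv _ e

lemma exists_matSimilar_fromBlocks_jordanBlockDiag (a c : ι → ℕ) :
    ∃ E, MatSimilar F (jordanBlockDiag F (a + c))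
      (Matrix.fromBlocks (jordanBlockDiag F a) E 0 (jordanBlockDiag F c)) := by
  let e : ((i : ι) × Fin (a i)) ⊕ ((i : ι) × Fin (c i)) ≃ (i : ι) × Fin ((a + c) i) :=
    (Equiv.sigmaSumDistrib _ _).symm.trans (Equiv.sigmaCongrRight fun _ => finSumFinEquiv)
  have hinl (i : ι) (k : Fin (a i)) : e (.inl ⟨i, k⟩) = ⟨i, k.castAdd (c i)⟩ := rfl
  have hinr (i : ι) (k : Fin (c i)) : e (.inr ⟨i, k⟩) = ⟨i, k.natAdd (a i)⟩ := rfl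
  refine MatSimilar.exists_fromBlocks e (fun ⟨i, k⟩ ⟨j, l⟩ => ?_) (fun ⟨i, k⟩ ⟨j, l⟩ => ?_)
    fun ⟨i, k⟩ ⟨j, l⟩ => ?_
  · simp [hinl, jordanBlockDiag_apply]
  · rw [hinl, hinr, jordanBlockDiag_apply, if_neg]
    rintro ⟨hij : i = j, h⟩
    subst hij
    rw [Fin.val_castAdd, Fin.val_natAdd] at h
    omega
  · obtain rfl | hij := eq_or_ne i j
    · simp [hinr, jordanBlockDiag_apply, add_assoc]
    · simp [hinr, jordanBlockDiag_apply, hij]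

lemma exists_matSimilar_fromBlocks_jordanBlock_kronecker {m : Type*} [Fintype m] (B : Matrix m m F)
    (a c : ℕ) : ∃ E, MatSimilar F (jordanBlock F (a + c) ⊗ₖ B)
      (Matrix.fromBlocks (jordanBlock F a ⊗ₖ B) E 0 (jordanBlock F c ⊗ₖ B)) := by
  let e : (Fin a × m) ⊕ (Fin c × m) ≃ Fin (a + c) × m :=
    (Equiv.sumProdDistrib _ _ _).symm.trans (finSumFinEquiv.prodCongr (.refl m))
  have hinl (k : Fin a) (i : m) : e (.inl (k, i)) = (k.castAdd c, i) := rfl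
  have hinr (k : Fin c) (i : m) : e (.inr (k, i)) = (k.natAdd a, i) := rfl
  refine MatSimilar.exists_fromBlocks e (fun ⟨k, i⟩ ⟨l, j⟩ => ?_) (fun ⟨k, i⟩ ⟨l, j⟩ => ?_)
    fun ⟨k, i⟩ ⟨l, j⟩ => ?_
  · simp [hinl, jordanBlock]
  · have hzero : jordanBlock F (a + c) (k.natAdd a) (l.castAdd c) = 0 := by
      rw [jordanBlock, Matrix.of_apply, Fin.val_castAdd, Fin.val_natAdd, if_neg (by omega)]
    rw [hinl, hinr, Matrix.kroneckerMap_apply, hzero, zero_mul]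
  · simp [hinr, jordanBlock, add_assoc]

theorem matSimilar_jordanBlock_sub_kronecker {p n r : ℕ} [ExpChar F p] (hr : r ≤ p ^ n) {m : Type*}
    [Fintype m] [DecidableEq m] {B : Matrix m m F} (hB : B ^ p ^ n = 1) (e : ι ≃ m) {d : ι → ℕ}
    (hd : ∀ i, d i ≤ p ^ n)
    (hsim : MatSimilar F (jordanBlock F r ⊗ₖ B) (jordanBlockDiag F d)) :
    MatSimilar F (jordanBlock F (p ^ n - r) ⊗ₖ B) (jordanBlockDiag F fun i => p ^ n - d i) := by
  have : NeZero (p ^ n) := ⟨(pow_pos (expChar_pos F p) n).ne'⟩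
  obtain ⟨E, hE⟩ := exists_matSimilar_fromBlocks_jordanBlock_kronecker B (p ^ n - r) r
  obtain ⟨E', hE'⟩ := exists_matSimilar_fromBlocks_jordanBlockDiag (F := F) (fun i => p ^ n - d i) d
  have hdiag : (fun i => p ^ n - d i) + d = fun _ => p ^ n :=
    funext fun i => Nat.sub_add_cancel (hd i)
  rw [Nat.sub_add_cancel hr] at hE
  rw [hdiag] at hE'
  have hfree : IsJordanFree F (m → F) (p ^ n) (jordanBlock F (p ^ n) ⊗ₖ (1 : Matrix m m F)) :=
    isJordanFree_jordanBlock_kronecker (one_pow _)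
  exact matSimilar_of_isJordanFree_fromBlocks
    ((isJordanFree_jordanBlock_kronecker hB).of_matSimilar hE)
    (hfree.of_matSimilar ((matSimilar_kronecker_one_jordanBlockDiag e _).trans hE')) hsim

end JordanBlockDiag

theorem stmt_5_general {F : Type*} [Field F] (p : ℕ) [ExpChar F p] (n r : ℕ) (hr : r ≤ p ^ n)
    {m : Type*} [Fintype m] [DecidableEq m] (B : Matrix m m F) (hB : B ^ p ^ n = 1)
    {ι κ : Type} [Fintype ι] [DecidableEq ι] [Fintype κ] [DecidableEq κ]
    (hcard : Fintype.card κ + Fintype.card ι = Fintype.card m) (lam : ι → ℕ)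
    (hsim : MatSimilar F (jordanBlock F r ⊗ₖ B) (jordanBlockDiag F lam)) :
    (∀ i, lam i ≤ p ^ n) ∧ MatSimilar F (jordanBlock F (p ^ n - r) ⊗ₖ B)
      (jordanBlockDiag F (Sum.elim (fun _ : κ => p ^ n) fun i => p ^ n - lam i)) := by
  have hle := le_expChar_pow_of_matSimilar hB hr hsim
  have hle' : ∀ i, Sum.elim (fun _ : κ => 0) lam i ≤ p ^ n := Sum.rec (fun _ => Nat.zero_le _) hle
  have hsim' := hsim.trans (matSimilar_jordanBlockDiag_sumElim_zero (κ := κ) lam).symm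
  have hmain := matSimilar_jordanBlock_sub_kronecker hr hB
    (Fintype.equivOfCardEq (Fintype.card_sum.trans hcard)) hle' hsim'
  have hdims : (fun i => p ^ n - Sum.elim (fun _ : κ => 0) lam i) =
      Sum.elim (fun _ => p ^ n) fun i => p ^ n - lam i :=
    funext (Sum.rec (fun _ => rfl) fun _ => rfl)
  exact ⟨hle, hdims ▸ hmain⟩

/-- Green's duality: from a decomposition of `J_r ⊗ J_s` one obtains a decomposition of
`J_{pⁿ−r} ⊗ J_s`. (Blocks `J_{pⁿ−λᵢ}` with `λᵢ = pⁿ` are empty, i.e. omitted.) -/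
theorem stmt_5 {F : Type*} [Field F] (p : ℕ) (hp : p.Prime) [CharP F p]
    (n : ℕ) (hn : 0 < n) (r s : ℕ) (hr : 1 ≤ r) (hr' : r ≤ p ^ n - 1)
    (hs : 1 ≤ s) (hs' : s ≤ p ^ n)
    (b : ℕ) (hb : b = min r s)
    (lam : Fin b → ℕ) (hanti : Antitone lam) (hpos : ∀ i, 0 < lam i)
    (hsim : MatSimilar F (jordanBlock F r ⊗ₖ jordanBlock F s) (jordanBlockDiag F lam)) :
    (∀ i, lam i ≤ p ^ n) ∧
    MatSimilar F (jordanBlock F (p ^ n - r) ⊗ₖ jordanBlock F s)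
      (jordanBlockDiag F (Sum.elim (fun _ : Fin (s - b) => p ^ n)
        (fun i : Fin b => p ^ n - lam i))) := by
  have := ExpChar.prime (R := F) hp
  exact stmt_5_general p n r (by omega) _ (jordanBlock_pow_expChar_pow_eq_one_iff.2 hs')
    (by simp; omega) lam hsim
end

section
/- Let p be a prime, F a field of characteristic p, and r, s integers with 1 ≤ r ≤ s ≤ p. Set e = r if r + s ≤ p, and e = p − s if r + s > p. Then the Kronecker product J_r ⊗ J_s is similar over F to the block-diagonal matrix consisting of one block J_{s−r+2i−1} for each 1 ≤ i ≤ e, together with r − e blocks equal to J_p. -/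
open Kronecker

/-!
Put `x = (J_r - 1) ⊗ 1`, `y = 1 ⊗ (J_s - 1)`, `u = 1 + x`, `a = y` and `b = -u⁻¹ x`. Then
`J_r ⊗ J_s - 1 = u (a - b)` with `u` invertible, `a ^ s = 0` and `b ^ r = 0`. The cofactor
`W = ∑ i < s, a ^ i b ^ (s - 1 - i)` satisfies `(a - b) W = a ^ s - b ^ s = 0`, so `a - b` kills the
elements `b ^ m W`, `m < r`, which are linearly independent because
`b ^ (r - 1) W = a ^ (s - 1) b ^ (r - 1)` is nonzero. Each of them ends a Jordan chain whose length
is governed by the power of `a - b` dividing `b ^ m W`.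

* If `m ≥ p - s`, then `b ^ m W` is a multiple of `b ^ (p - s) W = (a - b) ^ (p - 1)`.
* If `m < p - s`, then `b ^ m W` is a multiple of `(a - b) ^ (s - r + 2 m)`. Modulo `a ^ s` and
  `b ^ r` only `r - m` coefficients of the quotient matter, and they can be solved for because a
  nonzero polynomial with `k` terms, whose exponents are distinct in `F`, does not vanish to order
  `k` at `1`.

The lengths of these chains add up to `r s`, so together they form a Jordan basis.
-/

namespace JordanKronecker

open Finset Polynomial

section Fewnomial

lemma support_X_mul_derivative_sub {R : Type*} [CommRing R] [IsDomain R] {f : R[X]} {a : ℕ}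
    (ha : a ∈ f.support) (hinj : Set.InjOn (Nat.cast : ℕ → R) f.support) :
    (X * derivative f - C (a : R) * f).support = f.support.erase a := by
  have hcoeff (i : ℕ) : (X * derivative f - C (a : R) * f).coeff i = (i - a) * f.coeff i := by
    cases i with
    | zero => simp
    | succ i =>
      rw [coeff_sub, coeff_X_mul, coeff_derivative, coeff_C_mul, Nat.cast_succ]
      ring
  ext i
  rw [mem_support_iff, hcoeff, mul_ne_zero_iff, mem_erase, sub_ne_zero, ← mem_support_iff]
  exact and_congr_left fun hi => (hinj.eq_iff hi ha).not

/-- Passing from `f` to `X * f' - a * f` kills the monomial of degree `a` and costs one order of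
vanishing at `c`. -/
lemma eq_zero_of_X_sub_C_pow_dvd_of_card_support_le {R : Type*} [CommRing R] [IsDomain R] {c : R}
    (hc : c ≠ 0) {k : ℕ} {f : R[X]} (hinj : Set.InjOn (Nat.cast : ℕ → R) f.support)
    (hdvd : (X - C c) ^ k ∣ f) (hcard : #f.support ≤ k) : f = 0 := by
  induction k generalizing f with
  | zero => exact card_support_eq_zero.1 (Nat.le_zero.1 hcard)
  | succ k ih =>
    by_contra hf
    obtain ⟨a, ha⟩ := nonempty_support_iff.2 hf
    have hsupp := support_X_mul_derivative_sub ha hinj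
    have hzero : X * derivative f - C (a : R) * f = 0 := by
      refine ih ?_ ?_ ?_
      · rw [hsupp]
        exact hinj.mono (coe_subset.2 (erase_subset a _))
      · exact dvd_sub ((pow_sub_one_dvd_derivative_of_pow_dvd hdvd).mul_left X)
          (((pow_dvd_pow _ k.le_succ).trans hdvd).mul_left _)
      · rw [hsupp, card_erase_of_mem ha]
        lia
    obtain ⟨n, b, rfl⟩ : ∃ n b, f = monomial n b := by
      rw [← card_support_le_one_iff_monomial, ← card_erase_add_one ha, ← hsupp, hzero]
      simp
    have hroot : eval c (monomial n b) = 0 :=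
      dvd_iff_isRoot.1 ((dvd_pow_self _ k.succ_ne_zero).trans hdvd)
    simp_all

lemma natDegree_pow_X_sub_C_le {R : Type*} [CommRing R] {c : R} (t : ℕ) :
    ((X - C c) ^ t).natDegree ≤ t :=
  (natDegree_pow_le_of_le t (natDegree_X_sub_C_le c)).trans_eq (mul_one t)

lemma eq_zero_of_coeff_X_sub_C_pow_mul_eq_zero {R : Type*} [CommRing R] [IsDomain R] {c : R}
    (hc : c ≠ 0) {t q n : ℕ} (hqt : q ≤ t)
    (hinj : Set.InjOn (Nat.cast : ℕ → R) (range (t + n + 1))) {f : R[X]} (hf : f.natDegree ≤ n)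
    (hcoeff : ∀ i ∈ Icc q (q + n), ((X - C c) ^ t * f).coeff i = 0) : f = 0 := by
  have hdeg : ((X - C c) ^ t * f).natDegree ≤ t + n :=
    natDegree_mul_le_of_le (natDegree_pow_X_sub_C_le t) hf
  have hsupp : ((X - C c) ^ t * f).support ⊆ range (t + n + 1) \ Icc q (q + n) := fun i hi =>
    mem_sdiff.2 ⟨mem_range_succ_iff.2 ((le_natDegree_of_mem_supp i hi).trans hdeg),
      fun hmem => mem_support_iff.1 hi (hcoeff i hmem)⟩
  have hcard : #(range (t + n + 1) \ Icc q (q + n)) = t := by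
    rw [card_sdiff_of_subset (by grind), card_range, Nat.card_Icc]
    lia
  have hzero : (X - C c) ^ t * f = 0 :=
    eq_zero_of_X_sub_C_pow_dvd_of_card_support_le hc
      (hinj.mono (coe_subset.2 (hsupp.trans sdiff_subset))) (dvd_mul_right _ _)
      ((card_le_card hsupp).trans_eq hcard)
  exact (mul_eq_zero.1 hzero).resolve_left (pow_ne_zero t (X_sub_C_ne_zero c))

lemma exists_coeff_X_sub_C_pow_mul_eq {F : Type*} [Field F] {c : F} (hc : c ≠ 0) {t q n : ℕ}
    (hqt : q ≤ t) (hinj : Set.InjOn (Nat.cast : ℕ → F) (range (t + n + 1))) (g : ℕ → F) :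
    ∃ f : F[X], f.natDegree ≤ n ∧ ∀ i ∈ Icc q (q + n), ((X - C c) ^ t * f).coeff i = g i := by
  have mem_iff (f : F[X]) : f ∈ degreeLT F (n + 1) ↔ f.natDegree ≤ n := by
    rw [degreeLT_succ_eq_degreeLE, mem_degreeLE, natDegree_le_iff_degree_le]
  let L : degreeLT F (n + 1) →ₗ[F] Fin (n + 1) → F :=
    (LinearMap.pi fun i => lcoeff F (q + i)) ∘ₗ
      LinearMap.mulLeft F ((X - C c) ^ t) ∘ₗ (degreeLT F (n + 1)).subtype
  have coeff_eq (f : degreeLT F (n + 1)) (i : ℕ) (hi : i ∈ Icc q (q + n)) :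
      ((X - C c) ^ t * f.1).coeff i = L f ⟨i - q, by grind⟩ := by
    simp [L, Nat.add_sub_cancel' (mem_Icc.1 hi).1]
  have hL : Function.Injective L := (injective_iff_map_eq_zero L).2 fun f hLf => Subtype.ext <|
    eq_zero_of_coeff_X_sub_C_pow_mul_eq_zero hc hqt hinj ((mem_iff f).1 f.2) fun i hi => by
      rw [coeff_eq f i hi, hLf, Pi.zero_apply]
  obtain ⟨f, hLf⟩ := (LinearMap.injective_iff_surjective_of_finrank_eq_finrank
    (degreeLTEquiv F (n + 1)).finrank_eq).1 hL fun i => g (q + i)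
  exact ⟨f, (mem_iff f).1 f.2, fun i hi => by
    rw [coeff_eq f i hi, hLf]
    exact congrArg g (Nat.add_sub_cancel' (mem_Icc.1 hi).1)⟩
end Fewnomial

lemma sub_pow_char_sub_one {R : Type*} [CommRing R] (p : ℕ) [Fact p.Prime] [CharP R p] (x y : R) :
    (x - y) ^ (p - 1) = ∑ i ∈ range p, x ^ i * y ^ (p - 1 - i) := by
  have huniv : (MvPolynomial.X 0 - MvPolynomial.X 1 : MvPolynomial (Fin 2) (ZMod p)) ^ (p - 1) =
      ∑ i ∈ range p, MvPolynomial.X 0 ^ i * MvPolynomial.X 1 ^ (p - 1 - i) := by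
    have hne : (MvPolynomial.X 0 - MvPolynomial.X 1 : MvPolynomial (Fin 2) (ZMod p)) ≠ 0 :=
      sub_ne_zero.2 (MvPolynomial.X_injective.ne zero_ne_one)
    apply mul_right_cancel₀ hne
    rw [← pow_succ, Nat.sub_add_cancel (Fact.out : p.Prime).one_le, sub_pow_char, geom_sum₂_mul]
  let _ := ZMod.algebra R p
  simpa using congrArg (MvPolynomial.aeval ![x, y]) huniv

lemma homogenize_X_sub_C_pow {R : Type*} [CommRing R] (c : R) (t : ℕ) :
    ((X - C c) ^ t).homogenize t =
      (MvPolynomial.X 0 - MvPolynomial.C c * MvPolynomial.X 1) ^ t := by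
  induction t with
  | zero => simp
  | succ t ih =>
    rw [pow_succ, homogenize_mul _ _ ?_ (natDegree_X_sub_C_le c), ih, pow_succ, homogenize_sub,
      homogenize_X one_ne_zero, homogenize_C]
    · simp
    · exact natDegree_pow_X_sub_C_le t

lemma aeval_homogenize {R A : Type*} [CommSemiring R] [CommSemiring A] [Algebra R A] (f : R[X])
    (n : ℕ) (a b : A) : MvPolynomial.aeval ![a, b] (f.homogenize n) =
      ∑ kl ∈ antidiagonal n, f.coeff kl.1 • (a ^ kl.1 * b ^ kl.2) := by
  simp [homogenize, MvPolynomial.aeval_monomial, Algebra.smul_def]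

lemma aeval_homogenize_congr_of_pow_eq_zero {R A : Type*} [CommSemiring R] [CommSemiring A]
    [Algebra R A] {a b : A} {r s : ℕ} (hb : b ^ r = 0) (ha : a ^ s = 0)
    {f g : R[X]} {n : ℕ} (h : ∀ i j, i + j = n → i < s → j < r → f.coeff i = g.coeff i) :
    MvPolynomial.aeval ![a, b] (f.homogenize n) = MvPolynomial.aeval ![a, b] (g.homogenize n) := by
  simp only [aeval_homogenize]
  refine sum_congr rfl fun ⟨i, j⟩ hij => ?_
  rcases le_or_gt s i with hi | hi
  · simp [pow_eq_zero_of_le hi ha]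
  rcases le_or_gt r j with hj | hj
  · simp [pow_eq_zero_of_le hj hb]
  rw [h i j (mem_antidiagonal.1 hij) hi hj]

lemma aeval_homogenize_geom_sum {R A : Type*} [CommSemiring R] [CommSemiring A]
    [Algebra R A] (a b : A) (m s : ℕ) :
    MvPolynomial.aeval ![a, b] ((∑ i ∈ range s, X ^ i : R[X]).homogenize (m + s - 1)) =
      b ^ m * ∑ i ∈ range s, a ^ i * b ^ (s - 1 - i) := by
  rw [homogenize_finsetSum, map_sum, mul_sum]
  refine sum_congr rfl fun i hi => ?_
  have his := mem_range.1 hi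
  rw [homogenize_X_pow (by lia), show m + s - 1 - i = m + (s - 1 - i) by lia]
  simp only [map_mul, map_pow, MvPolynomial.aeval_X, Matrix.cons_val_zero, Matrix.cons_val_one]
  ring

/-- Only the monomials `a ^ i * b ^ j` with `i < s` and `j < r` survive; in that window the
coefficients of the right-hand side, all equal to `1`, are also those of a homogeneous multiple of
`(a - b) ^ (s - r + 2 * m)`. -/
lemma sub_pow_dvd_pow_mul_geom_sum {F A : Type*} [Field F] [CommRing A] [Algebra F A] {a b : A}
    {r s : ℕ} (hb : b ^ r = 0) (ha : a ^ s = 0) (hrs : r ≤ s) {m : ℕ}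
    (hm : m < r) (hinj : Set.InjOn (Nat.cast : ℕ → F) (range (m + s))) :
    (a - b) ^ (s - r + 2 * m) ∣ b ^ m * ∑ i ∈ range s, a ^ i * b ^ (s - 1 - i) := by
  obtain ⟨t, ht⟩ : ∃ t, t = s - r + 2 * m := ⟨_, rfl⟩
  obtain ⟨n, hn⟩ : ∃ n, r = m + n + 1 := ⟨r - m - 1, by lia⟩
  have hdeg : m + s - 1 = t + n := by lia
  obtain ⟨f, hf, hcoeff⟩ := exists_coeff_X_sub_C_pow_mul_eq (one_ne_zero (α := F))
    (show s - 1 - n ≤ t by lia) (by rwa [show t + n + 1 = m + s by lia]) fun _ => 1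
  have hcongr : MvPolynomial.aeval ![a, b] (((X - C 1) ^ t * f).homogenize (m + s - 1)) =
      MvPolynomial.aeval ![a, b] ((∑ i ∈ range s, X ^ i : F[X]).homogenize (m + s - 1)) := by
    refine aeval_homogenize_congr_of_pow_eq_zero hb ha fun i j hij hi hj => ?_
    rw [hcoeff i (mem_Icc.2 (by lia))]
    simp [hi, coeff_X_pow]
  refine ⟨MvPolynomial.aeval ![a, b] (f.homogenize n), ?_⟩
  rw [← ht, ← aeval_homogenize_geom_sum (R := F), ← hcongr, hdeg,
    homogenize_mul _ _ (natDegree_pow_X_sub_C_le t) hf, homogenize_X_sub_C_pow]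
  simp

lemma sub_pow_char_sub_one_eq_mul_geom_sum {R : Type*} [CommRing R] (p : ℕ) [Fact p.Prime]
    [CharP R p] {a b : R} {s : ℕ} (ha : a ^ s = 0) (hsp : s ≤ p) :
    (a - b) ^ (p - 1) = b ^ (p - s) * ∑ i ∈ range s, a ^ i * b ^ (s - 1 - i) := by
  rw [sub_pow_char_sub_one p, mul_sum]
  symm
  refine sum_subset_zero_on_sdiff (range_subset_range.2 hsp) (fun i hi => ?_) fun i hi => ?_
  · rw [pow_eq_zero_of_le (by grind) ha, zero_mul]
  · have := mem_range.1 hi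
    rw [show p - 1 - i = (p - s) + (s - 1 - i) by lia]
    ring

lemma sub_mul_geom_sum_eq_zero {R : Type*} [CommRing R] {a b : R} {r s : ℕ} (hb : b ^ r = 0)
    (ha : a ^ s = 0) (hrs : r ≤ s) :
    (a - b) * ∑ i ∈ range s, a ^ i * b ^ (s - 1 - i) = 0 := by
  rw [mul_comm, geom_sum₂_mul, ha, pow_eq_zero_of_le hrs hb, sub_zero]

lemma pow_mul_geom_sum {R : Type*} [CommSemiring R] {a b : R} {r s : ℕ} (hr : 0 < r) (hs : 0 < s)
    (hb : b ^ r = 0) :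
    b ^ (r - 1) * ∑ i ∈ range s, a ^ i * b ^ (s - 1 - i) = a ^ (s - 1) * b ^ (r - 1) := by
  rw [mul_sum, sum_eq_single_of_mem (s - 1) (by simpa using hs)]
  · simp [mul_comm]
  · intro i hi hne
    have := mem_range.1 hi
    rw [mul_left_comm, ← pow_add, pow_eq_zero_of_le (by lia) hb, mul_zero]

section JordanBasis

lemma linearIndependent_of_height {R V α : Type*} [Ring R] [AddCommGroup V] [Module R V]
    {f : Module.End R V} {w : α → V} {δ : α → ℕ} (hker : ∀ a, (f ^ (δ a + 1)) (w a) = 0)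
    (htop : ∀ n, LinearIndepOn R (fun a => (f ^ n) (w a)) {a | δ a = n}) :
    LinearIndependent R w := by
  classical
  rw [linearIndependent_iff']
  intro t g hg
  by_contra! hne
  obtain ⟨b, hb, hmax⟩ :=
    exists_max_image {a ∈ t | g a ≠ 0} δ (by simpa [Finset.Nonempty] using hne)
  rw [mem_filter] at hb
  have hlevel : ∑ a ∈ t with δ a = δ b, g a • (f ^ δ b) (w a) = 0 := by
    rw [← (f ^ δ b).map_zero, ← hg, map_sum]
    simp only [map_smul]
    refine sum_subset (filter_subset _ _) fun a ha hab => ?_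
    by_cases hga : g a = 0
    · rw [hga, zero_smul]
    have hlt : δ a < δ b :=
      lt_of_le_of_ne (hmax a (mem_filter.2 ⟨ha, hga⟩)) fun h => hab (mem_filter.2 ⟨ha, h⟩)
    rw [← Nat.sub_add_cancel (Nat.succ_le_of_lt hlt), pow_add, Module.End.mul_apply, hker, map_zero,
      smul_zero]
  exact hb.2 <| linearIndepOn_iff'.1 (htop (δ b)) {a ∈ t | δ a = δ b} g (by simp) hlevel b
    (mem_filter.2 ⟨hb.1, rfl⟩)

lemma linearIndependent_jordanChains {R V ι : Type*} [Ring R] [AddCommGroup V] [Module R V]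
    {f : Module.End R V} {d : ι → ℕ} {v : ι → V} (hker : ∀ i, (f ^ d i) (v i) = 0)
    (htop : LinearIndependent R fun i => (f ^ (d i - 1)) (v i)) :
    LinearIndependent R fun x : (i : ι) × Fin (d i) => (f ^ (d x.1 - 1 - x.2)) (v x.1) := by
  have hpow (n : ℕ) (i : ι) (k : Fin (d i)) :
      (f ^ n) ((f ^ (d i - 1 - k)) (v i)) = (f ^ (n + (d i - 1 - k))) (v i) := by
    rw [pow_add, Module.End.mul_apply]
  refine linearIndependent_of_height (f := f) (δ := fun x => x.2) (fun ⟨i, k⟩ => ?_) fun n => ?_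
  · rw [hpow, show (k : ℕ) + 1 + (d i - 1 - k) = d i by lia, hker]
  · have hinj : Set.InjOn Sigma.fst {x : (i : ι) × Fin (d i) | (x.2 : ℕ) = n} := by
      rintro ⟨i, k⟩ hk ⟨j, l⟩ hl (rfl : i = j)
      exact congrArg _ (Fin.ext (hk.trans hl.symm))
    refine (htop.linearIndepOn (s := Sigma.fst '' {x : (i : ι) × Fin (d i) | (x.2 : ℕ) = n})
      |>.comp_of_image hinj).congr ?_
    rintro ⟨i, k⟩ rfl
    simp only [hpow, Function.comp_apply]
    rw [show (k : ℕ) + (d i - 1 - k) = d i - 1 by lia]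

lemma linearIndependent_pow_apply {K V : Type*} [DivisionRing K] [AddCommGroup V] [Module K V]
    {f : Module.End K V} {r : ℕ} {v : V} (hker : (f ^ r) v = 0) (htop : (f ^ (r - 1)) v ≠ 0) :
    LinearIndependent K fun m : Fin r => (f ^ (m : ℕ)) v := by
  have hchain := linearIndependent_jordanChains (ι := Unit) (d := fun _ => r) (v := fun _ => v)
    (fun _ => hker) (linearIndependent_unique_iff.2 htop)
  have hrev (m : Fin r) : r - 1 - m.rev = m := by grind
  have hinj : Function.Injective fun m : Fin r => (⟨(), m.rev⟩ : (_ : Unit) × Fin r) := fun k l h =>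
    Fin.rev_injective (by simpa using h)
  simpa only [Function.comp_def, hrev] using hchain.comp _ hinj

variable {F A V : Type*} {ι : Type} [Field F] [AddCommGroup V] [Module F V] [Fintype ι]
  [DecidableEq ι] {d : ι → ℕ}

lemma toMatrix_one_add_eq_jordanBlockDiag {f : Module.End F V}
    (b : Module.Basis ((i : ι) × Fin (d i)) F V) (hzero : ∀ i (h : 0 < d i), f (b ⟨i, 0, h⟩) = 0)
    (hsucc : ∀ i k (h : k + 1 < d i), f (b ⟨i, k + 1, h⟩) = b ⟨i, k, by lia⟩) :
    LinearMap.toMatrix b b (1 + f) = jordanBlockDiag F d := by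
  ext ⟨i, k⟩ ⟨j, l, hl⟩
  rw [LinearMap.toMatrix_apply, LinearMap.add_apply, Module.End.one_apply, map_add,
    Finsupp.add_apply, Module.Basis.repr_self, jordanBlockDiag, Matrix.blockDiagonal'_apply]
  obtain rfl | hij := eq_or_ne i j
  · cases l with
    | zero => simp [hzero, jordanBlock, Finsupp.single_apply, Fin.ext_iff]
    | succ l =>
      simp only [hsucc, jordanBlock, Finsupp.single_apply, Module.Basis.repr_self, Fin.ext_iff,
        Sigma.mk.injEq, heq_eq_eq, true_and, dif_pos, cast_eq, Matrix.of_apply, add_left_inj]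
      grind
  · cases l <;> simp [hzero, hsucc, hij]

variable [FiniteDimensional F V]

lemma exists_basis_toMatrix_one_add_eq_jordanBlockDiag {f : Module.End F V} {v : ι → V}
    (hker : ∀ i, (f ^ d i) (v i) = 0) (htop : LinearIndependent F fun i => (f ^ (d i - 1)) (v i))
    (hcard : ∑ i, d i = Module.finrank F V) :
    ∃ b : Module.Basis ((i : ι) × Fin (d i)) F V,
      LinearMap.toMatrix b b (1 + f) = jordanBlockDiag F d := by
  let b := basisOfLinearIndependentOfCardEqFinrank' _
    (linearIndependent_jordanChains hker htop) (by simp [hcard])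
  have hb (i : ι) (k : Fin (d i)) : b ⟨i, k⟩ = (f ^ (d i - 1 - k)) (v i) := by simp [b]
  refine ⟨b, toMatrix_one_add_eq_jordanBlockDiag b (fun i h => ?_) fun i k h => ?_⟩
  · rw [hb, ← Module.End.mul_apply, ← pow_succ', Nat.sub_zero, Nat.sub_add_cancel h, hker]
  · rw [hb, hb, ← Module.End.mul_apply, ← pow_succ']
    congr 2
    dsimp only
    lia

variable [CommRing A] [Algebra F A] [Module A V] [IsScalarTower F A V]

lemma exists_basis_toMatrix_one_add_lsmul_eq_jordanBlockDiag {n : A} {w : ι → A} {v : V}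
    (hd : ∀ i, 0 < d i) (hzero : ∀ i, n * w i = 0) (hdvd : ∀ i, n ^ (d i - 1) ∣ w i)
    (hli : LinearIndependent F fun i => w i • v) (hcard : ∑ i, d i = Module.finrank F V) :
    ∃ b : Module.Basis ((i : ι) × Fin (d i)) F V,
      LinearMap.toMatrix b b (1 + Algebra.lsmul F F V n) = jordanBlockDiag F d := by
  choose c hc using hdvd
  refine exists_basis_toMatrix_one_add_eq_jordanBlockDiag (v := fun i => c i • v) (fun i => ?_) ?_
    hcard
  · simp only [← map_pow, Algebra.lsmul_coe, smul_smul]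
    rw [← Nat.sub_add_cancel (hd i), pow_succ', mul_assoc, ← hc, hzero, zero_smul]
  · simpa only [← map_pow, Algebra.lsmul_coe, smul_smul, ← hc] using hli

end JordanBasis

/-- The sizes of the Jordan blocks of `J_r ⊗ J_s` in characteristic `p`, for `r ≤ s ≤ p`: first the
`e = min r (p - s)` blocks of size below `p`, where `i` starts at `0`, then the `r - e` blocks of
size `p`. -/
def kroneckerBlockSize (p r s e : ℕ) : Fin e ⊕ Fin (r - e) → ℕ :=
  Sum.elim (fun i => s - r + 2 * i + 1) fun _ => p

lemma kroneckerBlockSize_pos {p r s e : ℕ} (hp : 0 < p) (i : Fin e ⊕ Fin (r - e)) :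
    0 < kroneckerBlockSize p r s e i := by
  rcases i with _ | _
  · exact Nat.succ_pos _
  · exact hp

lemma sum_kroneckerBlockSize {p r s e : ℕ} (hrs : r ≤ s) (hsp : s ≤ p)
    (he : e = min r (p - s)) :
    ∑ i, kroneckerBlockSize p r s e i = r * s := by
  have hsum (n : ℕ) : ∑ i : Fin n, (s - r + 2 * (i : ℕ) + 1) = n * (s - r + n) := by
    induction n with
    | zero => simp
    | succ n ih =>
      rw [Fin.sum_univ_castSucc]
      simp only [Fin.val_castSucc, Fin.val_last, ih]
      ring
  rw [Fintype.sum_sum_type]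
  simp only [kroneckerBlockSize, Sum.elim_inl, Sum.elim_inr, hsum, sum_const, card_univ,
    Fintype.card_fin, smul_eq_mul]
  obtain ⟨k, rfl⟩ := Nat.exists_eq_add_of_le hrs
  obtain ⟨l, rfl⟩ := Nat.exists_eq_add_of_le hsp
  simp only [Nat.add_sub_cancel_left] at he ⊢
  obtain rfl | ⟨rfl, h⟩ : e = r ∨ e = l ∧ l ≤ r := by lia
  · rw [Nat.sub_self]
    ring
  · obtain ⟨m, rfl⟩ := Nat.exists_eq_add_of_le h
    rw [Nat.add_sub_cancel_left]
    ring

/-- The exponent `m < r` for which the block labelled `i` has the last vector of its Jordan chain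
proportional to `b ^ m * ∑ j < s, a ^ j * b ^ (s - 1 - j)`. -/
def kroneckerBlockIndex {r e : ℕ} (her : e ≤ r) : Fin e ⊕ Fin (r - e) ≃ Fin r :=
  finSumFinEquiv.trans (finCongr (Nat.add_sub_cancel' her))

lemma sub_pow_kroneckerBlockSize_dvd (F : Type*) {A : Type*} [Field F] [CommRing A] [Algebra F A]
    {p r s e : ℕ} [Fact p.Prime] [CharP F p] {a b : A} (hb : b ^ r = 0) (ha : a ^ s = 0)
    (hrs : r ≤ s) (hsp : s ≤ p) (he : e = min r (p - s)) (her : e ≤ r)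
    (i : Fin e ⊕ Fin (r - e)) :
    (a - b) ^ (kroneckerBlockSize p r s e i - 1) ∣
      b ^ (kroneckerBlockIndex her i : ℕ) * ∑ j ∈ range s, a ^ j * b ^ (s - 1 - j) := by
  rcases i with i | i
  · refine sub_pow_dvd_pow_mul_geom_sum (F := F) hb ha hrs (i.2.trans_le her) ?_
    refine (CharP.natCast_injOn_Iio F p).mono fun k hk => ?_
    grind
  · nontriviality A
    have : CharP A p := charP_of_injective_algebraMap (algebraMap F A).injective p
    simp only [kroneckerBlockSize, kroneckerBlockIndex]
    rw [Sum.elim_inr, sub_pow_char_sub_one_eq_mul_geom_sum p ha hsp]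
    exact mul_dvd_mul_right (pow_dvd_pow b (by simp; lia)) _

section JordanType

variable {F A V : Type*} [Field F] [CommRing A] [Algebra F A] [AddCommGroup V] [Module F V]
  [Module A V] [IsScalarTower F A V] {p r s e : ℕ} [Fact p.Prime] [CharP F p]

lemma exists_basis_toMatrix_one_add_mul_sub {a b u : A} {v : V} (hu : IsUnit u)
    (hb : b ^ r = 0) (ha : a ^ s = 0) (hr : 0 < r) (hrs : r ≤ s) (hsp : s ≤ p)
    (he : e = min r (p - s))
    (hv : (a ^ (s - 1) * b ^ (r - 1)) • v ≠ 0) (hV : Module.finrank F V = r * s) :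
    ∃ B : Module.Basis ((i : Fin e ⊕ Fin (r - e)) × Fin (kroneckerBlockSize p r s e i)) F V,
      LinearMap.toMatrix B B (1 + Algebra.lsmul F F V (u * (a - b))) =
        jordanBlockDiag F (kroneckerBlockSize p r s e) := by
  have hfin : FiniteDimensional F V :=
    Module.finite_of_finrank_pos (hV ▸ Nat.mul_pos hr (hr.trans_le hrs))
  have her : e ≤ r := he.trans_le (min_le_left _ _)
  let w := ∑ i ∈ range s, a ^ i * b ^ (s - 1 - i)
  have hli : LinearIndependent F fun m : Fin r => (b ^ (m : ℕ) * w) • v := by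
    have hpow := linearIndependent_pow_apply (f := Algebra.lsmul F F V b) (r := r) (v := w • v)
    simp only [← map_pow, Algebra.lsmul_coe, smul_smul] at hpow
    refine hpow ?_ ?_
    · rw [hb, zero_mul, zero_smul]
    · rwa [pow_mul_geom_sum hr (hr.trans_le hrs) hb]
  refine exists_basis_toMatrix_one_add_lsmul_eq_jordanBlockDiag
    (kroneckerBlockSize_pos (Fact.out : p.Prime).pos) (fun i => ?_) (fun i => ?_)
    (hli.comp _ (kroneckerBlockIndex her).injective) ?_
  · rw [mul_assoc, mul_left_comm (a - b), sub_mul_geom_sum_eq_zero hb ha hrs, mul_zero, mul_zero]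
  · rw [mul_pow, (hu.pow _).mul_left_dvd]
    exact sub_pow_kroneckerBlockSize_dvd F hb ha hrs hsp he her i
  · rw [sum_kroneckerBlockSize hrs hsp he, hV]

lemma exists_basis_toMatrix_lsmul_one_add_mul_one_add {x y : A} {v : V}
    (hx : x ^ r = 0) (hy : y ^ s = 0) (hr : 0 < r) (hrs : r ≤ s) (hsp : s ≤ p)
    (he : e = min r (p - s)) (hv : (x ^ (r - 1) * y ^ (s - 1)) • v ≠ 0)
    (hV : Module.finrank F V = r * s) :
    ∃ B : Module.Basis ((i : Fin e ⊕ Fin (r - e)) × Fin (kroneckerBlockSize p r s e i)) F V,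
      LinearMap.toMatrix B B (Algebra.lsmul F F V ((1 + x) * (1 + y))) =
        jordanBlockDiag F (kroneckerBlockSize p r s e) := by
  obtain ⟨u, hu⟩ : IsUnit (1 + x) := IsNilpotent.isUnit_one_add ⟨r, hx⟩
  let c : Aˣ := -u⁻¹
  have hc : (1 + x) * (1 + y) = 1 + u * (y - c * x) := by
    simp only [c, mul_sub, Units.val_neg, neg_mul, mul_neg, Units.mul_inv_cancel_left, ← hu]
    linear_combination hu
  rw [hc, map_add, map_one]
  refine exists_basis_toMatrix_one_add_mul_sub (v := v) u.isUnit ?_ hy hr hrs hsp he ?_ hV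
  · rw [mul_pow, hx, mul_zero]
  · rwa [mul_pow, mul_left_comm, mul_comm (y ^ _), mul_smul, Ne,
      (c.isUnit.pow _).smul_eq_zero]

open scoped IsMulCommutative in
lemma exists_basis_toMatrix_one_add_mul_one_add {x y : Module.End F V}
    (hxy : Commute x y) (hx : x ^ r = 0) (hy : y ^ s = 0) (hr : 0 < r)
    (hrs : r ≤ s) (hsp : s ≤ p) (he : e = min r (p - s))
    (hne : x ^ (r - 1) * y ^ (s - 1) ≠ 0) (hV : Module.finrank F V = r * s) :
    ∃ B : Module.Basis ((i : Fin e ⊕ Fin (r - e)) × Fin (kroneckerBlockSize p r s e i)) F V,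
      LinearMap.toMatrix B B ((1 + x) * (1 + y)) =
        jordanBlockDiag F (kroneckerBlockSize p r s e) := by
  obtain ⟨v, hv⟩ := DFunLike.ne_iff.1 hne
  have : IsMulCommutative (Algebra.adjoin F {x, y}) := Algebra.isMulCommutative_adjoin F (by
    rintro _ (rfl | rfl) _ (rfl | rfl)
    exacts [rfl, hxy, hxy.symm, rfl])
  let x' : Algebra.adjoin F {x, y} := ⟨x, Algebra.subset_adjoin (by simp)⟩
  let y' : Algebra.adjoin F {x, y} := ⟨y, Algebra.subset_adjoin (by simp)⟩
  exact exists_basis_toMatrix_lsmul_one_add_mul_one_add (x := x') (y := y') (v := v)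
    (Subtype.ext hx) (Subtype.ext hy) hr hrs hsp he hv hV

end JordanType

lemma matSimilar_of_toMatrix_eq {F n m : Type*} [Field F] [Fintype n] [DecidableEq n] [Fintype m]
    [DecidableEq m] {M : Matrix n n F} {N : Matrix m m F} (b : Module.Basis m F (n → F))
    (h : LinearMap.toMatrix b b (Matrix.toLinAlgEquiv' M) = N) : MatSimilar F M N :=
  ⟨b.equivFun, fun v => h ▸ (LinearMap.toMatrix_mulVec_repr b b (Matrix.toLin' M) v).symm⟩

lemma matSimilar_one_add_mul_one_add {F n : Type*} [Field F] [Fintype n] [DecidableEq n]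
    {p r s e : ℕ} [Fact p.Prime] [CharP F p] {x y : Matrix n n F} (hxy : Commute x y)
    (hx : x ^ r = 0) (hy : y ^ s = 0) (hr : 0 < r) (hrs : r ≤ s) (hsp : s ≤ p)
    (he : e = min r (p - s)) (hne : x ^ (r - 1) * y ^ (s - 1) ≠ 0)
    (hcard : Fintype.card n = r * s) :
    MatSimilar F ((1 + x) * (1 + y)) (jordanBlockDiag F (kroneckerBlockSize p r s e)) := by
  let φ : Matrix n n F ≃ₐ[F] Module.End F (n → F) := Matrix.toLinAlgEquiv'
  obtain ⟨b, hb⟩ := exists_basis_toMatrix_one_add_mul_one_add (hxy.map φ)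
    (by rw [← map_pow, hx, map_zero]) (by rw [← map_pow, hy, map_zero]) hr hrs hsp he
    (by rwa [← map_pow, ← map_pow, ← map_mul, map_ne_zero_iff φ φ.injective]) (by simp [hcard])
  exact matSimilar_of_toMatrix_eq b (by simpa only [map_mul, map_add, map_one] using hb)

lemma jordanBlock_sub_one_pow_apply {R : Type*} [Ring R] {m : ℕ} (k : ℕ) (i j : Fin m) :
    ((jordanBlock R m - 1) ^ k) i j = if (j : ℕ) = i + k then 1 else 0 := by
  induction k generalizing i with
  | zero => simp [Matrix.one_apply, Fin.ext_iff, eq_comm]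
  | succ k ih =>
    have hone (l : Fin m) : (jordanBlock R m - 1) i l = if (l : ℕ) = i + 1 then 1 else 0 := by
      simp only [jordanBlock, Matrix.sub_apply, Matrix.of_apply, Matrix.one_apply, Fin.ext_iff]
      grind
    simp only [pow_succ', Matrix.mul_apply, hone, ih, ite_mul, one_mul, zero_mul]
    by_cases hi : (i : ℕ) + 1 < m
    · rw [sum_eq_single_of_mem ⟨i + 1, hi⟩ (mem_univ _) (by grind)]
      grind
    · rw [sum_eq_zero (by grind), if_neg (by lia)]

lemma jordanBlock_sub_one_pow_self (R : Type*) [Ring R] (m : ℕ) :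
    (jordanBlock R m - 1) ^ m = 0 := by
  ext i j
  rw [jordanBlock_sub_one_pow_apply, if_neg (by lia), Matrix.zero_apply]

lemma kronecker_one_pow_mul_one_kronecker_pow {R m n : Type*} [CommSemiring R] [Fintype m]
    [DecidableEq m] [Fintype n] [DecidableEq n] (M : Matrix m m R) (N : Matrix n n R) (k l : ℕ) :
    (M ⊗ₖ (1 : Matrix n n R)) ^ k * ((1 : Matrix m m R) ⊗ₖ N) ^ l = (M ^ k) ⊗ₖ (N ^ l) := by
  let φ := Matrix.kroneckerAlgEquiv m n R
  have hφ (P : Matrix m m R) (Q : Matrix n n R) : φ (P ⊗ₜ Q) = P ⊗ₖ Q := by simp [φ]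
  simp only [← hφ, ← map_pow, ← map_mul, Algebra.TensorProduct.tmul_pow,
    Algebra.TensorProduct.tmul_mul_tmul, one_pow, one_mul, mul_one]

lemma kronecker_eq_one_add_mul_one_add {R m n : Type*} [CommRing R] [Fintype m] [DecidableEq m]
    [Fintype n] [DecidableEq n] (M : Matrix m m R) (N : Matrix n n R) :
    M ⊗ₖ N = (1 + (M - 1) ⊗ₖ (1 : Matrix n n R)) * (1 + (1 : Matrix m m R) ⊗ₖ (N - 1)) := by
  rw [← Matrix.one_kronecker_one, ← Matrix.add_kronecker, ← Matrix.kronecker_add, add_sub_cancel,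
    add_sub_cancel, ← Matrix.mul_kronecker_mul, mul_one, one_mul]

end JordanKronecker

open JordanKronecker

/-- Renaud's base case: for `1 ≤ r ≤ s ≤ p`, `J_r ⊗ J_s` decomposes into the blocks
`J_{s−r+2i−1}` for `1 ≤ i ≤ e`, together with `r − e` blocks `J_p`. -/
theorem stmt_7 {F : Type*} [Field F] (p : ℕ) (hp : p.Prime) [CharP F p]
    (r s : ℕ) (hr : 1 ≤ r) (hrs : r ≤ s) (hsp : s ≤ p)
    (e : ℕ) (he : e = if r + s ≤ p then r else p - s) :
    MatSimilar F (jordanBlock F r ⊗ₖ jordanBlock F s)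
      (jordanBlockDiag F (Sum.elim
        (fun i : Fin e => s - r + 2 * (i : ℕ) + 1)
        (fun _ : Fin (r - e) => p))) := by
  have : Fact p.Prime := ⟨hp⟩
  let x : Matrix (Fin r × Fin s) (Fin r × Fin s) F := (jordanBlock F r - 1) ⊗ₖ 1
  let y : Matrix (Fin r × Fin s) (Fin r × Fin s) F := 1 ⊗ₖ (jordanBlock F s - 1)
  have hpow (k l : ℕ) : x ^ k * y ^ l =
      ((jordanBlock F r - 1) ^ k) ⊗ₖ ((jordanBlock F s - 1) ^ l) :=
    kronecker_one_pow_mul_one_kronecker_pow _ _ k l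
  have hxy : Commute x y := by simp [Commute, SemiconjBy, x, y, ← Matrix.mul_kronecker_mul]
  have hx : x ^ r = 0 := by simpa [jordanBlock_sub_one_pow_self] using hpow r 0
  have hy : y ^ s = 0 := by simpa [jordanBlock_sub_one_pow_self] using hpow 0 s
  have hne : x ^ (r - 1) * y ^ (s - 1) ≠ 0 := fun h => by
    have hentry := congrFun₂ h (⟨0, hr⟩, ⟨0, by lia⟩) (⟨r - 1, by lia⟩, ⟨s - 1, by lia⟩)
    simp [hpow, jordanBlock_sub_one_pow_apply] at hentry
  rw [kronecker_eq_one_add_mul_one_add]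
  exact matSimilar_one_add_mul_one_add hxy hx hy hr hrs hsp (by grind) hne (by simp)
end
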